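/- arXiv:math/0702117 — 2 statements merged into one kernel-verified Lean document; each statement's English description precedes it below -/
import Mathlib

section
/- Let G be a hyperbolic group, let h ∈ G be an element of infinite order, and suppose there exist a ∈ G of infinite order and integers p, q such that h^q = a h^p a^{-1} in G. Then p = q. -/
/-- The word metric on a group `G` with respect to a generating set `S`:
`wordDist S g h` is the least length of a word in `S ∪ S⁻¹` representing `g⁻¹ * h`. -/
noncomputable def wordDist {G : Type*} [Group G] (S : Set G) (g h : G) : ℝ :=
  sInf {r : ℝ | ∃ l : List G, (∀ x ∈ l, x ∈ S ∨ x⁻¹ ∈ S) ∧ l.prod = g⁻¹ * h ∧ r = l.length}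

/-- The Gromov product `(x|y)_w` with respect to the word metric for `S`. -/
noncomputable def gromovProd {G : Type*} [Group G] (S : Set G) (w x y : G) : ℝ :=
  (wordDist S x w + wordDist S y w - wordDist S x y) / 2

/-- A group is (Gromov) hyperbolic if it admits a finite generating set `S` such that
the word metric `d_S` satisfies the Gromov product four-point condition for some `δ ≥ 0`. -/
def IsHyperbolicGroup (G : Type*) [Group G] : Prop :=
  ∃ S : Set G, S.Finite ∧ Subgroup.closure S = ⊤ ∧
    ∃ δ : ℝ, 0 ≤ δ ∧ ∀ w x y z : G,
      gromovProd S w x y ≥ min (gromovProd S w x z) (gromovProd S w y z) - δ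

structure HM {G : Type*} [Group G] (d : G → G → ℝ) (δ : ℝ) : Prop where
  refl : ∀ x, d x x = 0
  symm : ∀ x y, d x y = d y x
  tri : ∀ x y z, d x z ≤ d x y + d y z
  inv : ∀ b x y, d (b * x) (b * y) = d x y
  fin : ∀ r : ℝ, {x | d 1 x ≤ r}.Finite
  mid : ∀ g, ∃ m, d 1 m + d m g = d 1 g ∧ d 1 m ≤ d m g + 1 ∧ d m g ≤ d 1 m + 1
  dpos : 0 ≤ δ
  four : ∀ x y z w, d x y + d z w ≤ d x z + d y w + 2 * δ ∨ d x y + d z w ≤ d x w + d y z + 2 * δ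

namespace HM
variable {G : Type*} [Group G] {d : G → G → ℝ} {δ : ℝ}

lemma nonneg (H : HM d δ) (x y : G) : 0 ≤ d x y := by
  have := H.tri x y x
  have := H.symm x y
  have := H.refl x
  linarith

lemma pow_le (H : HM d δ) (h : G) (n : ℕ) : d 1 (h ^ n) ≤ n * d 1 h := by
  induction n with
  | zero => simp [H.refl]
  | succ n ih =>
    have h1 := H.tri 1 (h ^ n) (h ^ (n+1))
    have h2 := H.inv (h ^ n) 1 h
    rw [mul_one, ← pow_succ] at h2
    push_cast
    linarith

lemma inj_pow {h : G} (hord : ∀ n : ℤ, n ≠ 0 → h ^ n ≠ 1) : Function.Injective (fun n : ℕ => h ^ n) := by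
  intro m n hmn
  by_contra hne
  apply hord ((m : ℤ) - n) (by omega)
  rw [zpow_sub]
  simp only [zpow_natCast]
  simp only at hmn
  rw [hmn, mul_inv_cancel]

lemma unbdd (H : HM d δ) {h : G} (hord : ∀ n : ℤ, n ≠ 0 → h ^ n ≠ 1) (R : ℝ) :
    ∃ k : ℕ, R < d 1 (h ^ k) := by
  by_contra! hc
  exact Set.infinite_range_of_injective (inj_pow hord)
    ((H.fin R).subset (by rintro _ ⟨k, rfl⟩; exact hc k))

lemma pigeon (H : HM d δ) {h : G} (hord : ∀ n : ℤ, n ≠ 0 → h ^ n ≠ 1) (K : ℝ)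
    (hK : ∀ N : ℕ, ∃ m : G, ∀ j : ℕ, j ≤ N → d m (h ^ j * m) ≤ K) : False := by
  set F := (H.fin K).toFinset with hF
  obtain ⟨m, hm⟩ := hK F.card
  have : (Finset.range (F.card + 1)).card ≤ F.card := by
    apply Finset.card_le_card_of_injOn (fun j => m⁻¹ * (h ^ j * m))
    · intro j hj
      simp only [Finset.coe_range, Set.mem_Iio] at hj
      simp only [hF, Set.Finite.coe_toFinset, Set.mem_ofPred_eq]
      have := H.inv m 1 (m⁻¹ * (h ^ j * m))
      rw [mul_one, mul_inv_cancel_left] at this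
      rw [← this]
      exact hm j (by omega)
    · intro i _ j _ hij
      simp only [mul_right_inj, mul_left_inj] at hij
      exact inj_pow hord hij
  simp at this

lemma near (H : HM d δ) {P Q m b : G} {D : ℝ} (hm : d P m + d m Q = d P Q)
    (hP : d P (b * P) ≤ D) (hQ : d Q (b * Q) ≤ D)
    (h1 : 2 * D + δ < d P m) (h2 : 2 * D + δ < d m Q) :
    d P (b * m) + d (b * m) Q ≤ d P Q + 4 * δ := by
  have e1 := H.inv b P m
  have e2 := H.inv b m Q
  have e3 := H.inv b P Q
  have t1 := H.tri (b * P) P (b * m)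
  have t2 := H.tri P (b * P) (b * m)
  have t3 := H.tri (b * m) Q (b * Q)
  have t4 := H.tri (b * m) (b * Q) Q
  have t5 := H.tri P (b * Q) Q
  have s1 := H.symm P (b * P)
  have s2 := H.symm Q (b * Q)
  have s3 := H.symm Q (b * m)
  have s4 := H.symm (b * P) (b * m)
  have s5 := H.symm (b * Q) (b * m)
  have s6 := H.symm (b * Q) Q
  have dp := H.dpos
  have f1 := H.four P (b * m) (b * P) (b * Q)
  have f2 := H.four Q (b * m) P (b * Q)
  have s7 := H.symm P Q
  have s8 := H.symm (b * m) P
  have n1 := H.nonneg P (b * P)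
  rcases f1 with f1 | f1
  · linarith
  rcases f2 with f2 | f2
  · linarith
  · linarith

lemma close (H : HM d δ) {P Q m z : G} (hm : d P m + d m Q = d P Q) :
    d m z ≤ (d P z - d P m) + 2 * δ ∨ d m z ≤ (d z Q - d m Q) + 2 * δ := by
  have f := H.four P Q m z
  have s1 := H.symm Q z
  have s2 := H.symm Q m
  rcases f with f | f
  · right; linarith
  · left; linarith

/-- a commuting element with translation -/
lemma double (H : HM d δ) {g b m : G} {D : ℝ} (hc : b * g = g * b)
    (hm : d 1 m + d m g = d 1 g) (hb : d 1 b ≤ D)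
    (h1 : 10 * D + 20 * δ < d 1 m) (h2 : 10 * D + 20 * δ < d m g) :
    2 * d m (b * m) - 14 * δ ≤ d m (b * b * m) := by
  have D0 : 0 ≤ D := (H.nonneg _ _).trans hb
  have dp := H.dpos
  have hbg : d g (b * g) = d 1 b := by
    rw [hc]; have := H.inv g 1 b; rwa [mul_one] at this
  have hbb : d 1 (b * b) ≤ 2 * D := by
    have := H.inv b 1 b
    rw [mul_one] at this
    have := H.tri 1 b (b * b)
    linarith
  have n1 := H.near (b := b) (D := D) hm (by simpa using hb) (by linarith) (by linarith) (by linarith)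
  have c1 := H.close (z := b * m) hm
  have e1 := H.inv b 1 m
  have e2 := H.inv b 1 (b * m)
  have e3 := H.inv b m (b * m)
  rw [mul_one, ← mul_assoc] at e2
  rw [mul_one] at e1
  rw [← mul_assoc] at e3
  have f1 := H.four 1 (b * b * m) b (b * m)
  have f2 := H.four 1 (b * m) b (b * b * m)
  have t1 := H.tri 1 b (b * m)
  have t2 := H.tri b 1 (b * m)
  have t3 := H.tri b 1 (b * b * m)
  have t3' := H.tri 1 b (b * b * m)
  have t4 := H.tri 1 m (b * b * m)
  have t5 := H.tri 1 (b * b * m) m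
  have t6 := H.tri 1 m (b * m)
  have t7 := H.tri 1 (b * m) m
  have s1 := H.symm 1 b
  have s2 := H.symm (b * m) m
  have s3 := H.symm (b * b * m) m
  have s4 := H.symm (b * b * m) b
  have s5 := H.symm (b * b * m) (b * m)
  have s6 := H.symm (b * m) b
  have tt := H.tri 1 (b * m) g
  have tt' := H.tri 1 m g
  have bd : d m (b * m) ≤ D + 6 * δ := by
    rcases c1 with c1 | c1 <;> linarith
  rcases f1 with f1 | f1
  · rcases f2 with f2 | f2
    · linarith
    · rcases c1 with c1 | c1 <;> linarith
  · rcases f2 with f2 | f2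
    · rcases c1 with c1 | c1 <;> linarith
    · rcases c1 with c1 | c1 <;> linarith

lemma grow (H : HM d δ) {g : G} (hg : d 1 g + 2 * δ + 1 ≤ d 1 (g * g)) (n : ℕ) :
    (n : ℝ) ≤ d 1 (g ^ (n+1)) := by
  have key : ∀ n : ℕ, d 1 (g ^ (n+1)) + 1 ≤ d 1 (g ^ (n+2)) := by
    intro n
    have dp := H.dpos
    induction n with
    | zero => simp only [zero_add, pow_one, pow_two]; linarith
    | succ n ih =>
      have f := H.four 1 (g * g) g (g ^ (n+3))
      have e1 := H.inv g 1 (g ^ (n+2))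
      have e2 := H.inv (g*g) 1 (g ^ (n+1))
      have e3 := H.inv g 1 g
      rw [mul_one] at e1 e2 e3
      rw [← pow_succ'] at e1
      rw [mul_assoc, ← pow_succ', ← pow_succ'] at e2
      have s1 := H.symm (g * g) g
      simp only [add_assoc] at *
      norm_num at *
      rcases f with f | f <;> linarith
  induction n with
  | zero => simpa using H.nonneg _ _
  | succ n ih =>
    have := key n
    push_cast
    simp only [add_assoc] at *
    norm_num at *
    linarith

lemma exists_grow (H : HM d δ) {h : G} (hord : ∀ n : ℤ, n ≠ 0 → h ^ n ≠ 1) :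
    ∃ (i : ℕ) (y : G), d y (h ^ i * y) + 2 * δ + 1 ≤ d y (h ^ i * h ^ i * y) := by
  by_contra! hc
  apply H.pigeon hord (16 * δ + 1)
  intro N
  have dp := H.dpos
  obtain ⟨k, hk⟩ := H.unbdd hord (2 * (10 * (N * d 1 h) + 20 * δ) + 2)
  obtain ⟨m, hm, hm1, hm2⟩ := H.mid (h ^ k)
  refine ⟨m, fun j hj => ?_⟩
  have hb : d 1 (h ^ j) ≤ N * d 1 h := (H.pow_le h j).trans
    (mul_le_mul_of_nonneg_right (by exact_mod_cast hj) (H.nonneg _ _))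
  have := H.double (b := h ^ j) (by rw [← pow_add, ← pow_add, add_comm]) hm hb (by linarith) (by linarith)
  have := hc j m
  linarith

lemma lower (H : HM d δ) {h : G} (hord : ∀ n : ℤ, n ≠ 0 → h ^ n ≠ 1) :
    ∃ (i : ℕ) (B : ℝ), ∀ n : ℕ, (n : ℝ) - B ≤ d 1 (h ^ (i * n)) := by
  obtain ⟨i, y, hy⟩ := H.exists_grow hord
  set g := y⁻¹ * h ^ i * y with hg
  have e : ∀ z : G, d 1 (y⁻¹ * z * y) = d y (z * y) := by
    intro z
    have := H.inv y 1 (y⁻¹ * z * y)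
    rw [← this]; congr 1 <;> group
  have hgg : g * g = y⁻¹ * (h ^ i * h ^ i) * y := by rw [hg]; group
  have G1 := H.grow (g := g) (by rw [hgg, hg, e, e]; exact hy)
  refine ⟨i, 2 * d 1 y + 1, fun n => ?_⟩
  rcases n with _ | n
  · have := H.nonneg 1 y
    have := H.nonneg 1 (h ^ (i * 0))
    push_cast; linarith
  have h1 := G1 n
  have hp : g ^ (n+1) = y⁻¹ * h ^ (i * (n+1)) * y := by
    have := conj_pow (i := n+1) (a := y⁻¹) (b := h ^ i)
    rw [inv_inv] at this
    rw [hg, this, pow_mul]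
  rw [hp, e] at h1
  have t1 := H.tri y 1 (h ^ (i * (n+1)) * y)
  have t2 := H.tri 1 (h ^ (i * (n+1))) (h ^ (i * (n+1)) * y)
  have t3 := H.inv (h ^ (i * (n+1))) 1 y
  rw [mul_one] at t3
  have s := H.symm 1 y
  push_cast
  linarith

lemma subadd (H : HM d δ) (h : G) : Subadditive (fun n : ℕ => d 1 (h ^ n)) := by
  intro m n
  have h1 := H.tri 1 (h ^ m) (h ^ (m+n))
  have h2 := H.inv (h ^ m) 1 (h ^ n)
  rw [mul_one, ← pow_add] at h2
  simp only
  linarith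

lemma tl (H : HM d δ) (h : G) : ∃ τ : ℝ, 
    Filter.Tendsto (fun n : ℕ => d 1 (h ^ n) / n) Filter.atTop (nhds τ) := 
  ⟨_, (H.subadd h).tendsto_lim ⟨0, by rintro _ ⟨n, rfl⟩; have := H.nonneg 1 (h ^ n); simp only; positivity⟩⟩

lemma natAbs_dist (H : HM d δ) (h : G) (n : ℤ) : d 1 (h ^ n.natAbs) = d 1 (h ^ n) := by
  rcases Int.natAbs_eq n with hn | hn
  · conv_rhs => rw [hn, zpow_natCast]
  · conv_rhs => rw [hn, zpow_neg, zpow_natCast]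
    have := H.inv (h ^ n.natAbs) 1 (h ^ n.natAbs)⁻¹
    rw [mul_one, mul_inv_cancel, H.symm] at this
    exact this

lemma abs_eq (H : HM d δ) {h a : G} (hord : ∀ n : ℤ, n ≠ 0 → h ^ n ≠ 1) (p q : ℤ)
    (hpq : h ^ q = a * h ^ p * a⁻¹) (hp : p ≠ 0) (hq : q ≠ 0) : p.natAbs = q.natAbs := by
  obtain ⟨τ, hτ⟩ := H.tl h
  obtain ⟨i, B, hB⟩ := H.lower hord
  have lin : ∀ c : ℕ, 0 < c → Filter.Tendsto (fun n : ℕ => d 1 (h ^ (c * n)) / n) Filter.atTop (nhds (c * τ)) := by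
    intro c hc
    have h1 : Filter.Tendsto (fun n : ℕ => c * n) Filter.atTop Filter.atTop :=
      Filter.tendsto_id.const_mul_atTop' hc
    have h2 := (hτ.comp h1).const_mul (c : ℝ)
    refine h2.congr fun n => ?_
    have : (c : ℝ) ≠ 0 := by positivity
    simp only [Function.comp]
    push_cast
    field_simp
  have cz : ∀ C : ℝ, Filter.Tendsto (fun n : ℕ => C / (n : ℝ)) Filter.atTop (nhds 0) :=
    fun C => tendsto_const_div_atTop_nhds_zero_nat C
  have i0 : 0 < i := by
    rcases Nat.eq_zero_or_pos i with h0 | h0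
    · exfalso
      obtain ⟨n, hn⟩ := exists_nat_gt B
      have := hB n
      rw [h0] at this
      simp [H.refl] at this
      linarith
    · exact h0
  have τpos : 1 ≤ i * τ := by
    have l1 : Filter.Tendsto (fun n : ℕ => 1 - B / (n : ℝ)) Filter.atTop (nhds (1 - 0)) :=
      (cz B).const_sub 1
    rw [sub_zero] at l1
    refine le_of_tendsto_of_tendsto l1 (lin i i0) ?_
    filter_upwards [Filter.eventually_gt_atTop 0] with n hn
    have : (0:ℝ) < n := by exact_mod_cast hn
    rw [le_div_iff₀ this, sub_mul, div_mul_cancel₀ _ this.ne', one_mul]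
    exact hB n
  have bd : ∀ n : ℕ, |d 1 (h ^ (q.natAbs * n)) - d 1 (h ^ (p.natAbs * n))| ≤ 2 * d 1 a := by
    intro n
    have e : ∀ r : ℤ, d 1 (h ^ (r.natAbs * n)) = d 1 ((h ^ r) ^ n) := by
      intro r
      have := H.natAbs_dist h (r * n)
      rw [Int.natAbs_mul, Int.natAbs_natCast, zpow_mul, zpow_natCast] at this
      exact this
    rw [e, e, hpq, conj_pow]
    set z := (h ^ p) ^ n
    have t1 := H.tri 1 a (a * z * a⁻¹)
    have t2 := H.tri a (a * z) (a * z * a⁻¹)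
    have t3 := H.tri a (a * z * a⁻¹) (a * z)
    have t4 := H.tri a 1 (a * z * a⁻¹)
    have e1 := H.inv a 1 z
    have e2 := H.inv (a * z * a⁻¹) 1 a
    rw [mul_one] at e1 e2
    rw [inv_mul_cancel_right] at e2
    have s1 := H.symm a 1
    have s2 := H.symm (a * z) (a * z * a⁻¹)
    rw [abs_le]; constructor <;> linarith
  have l2 := (lin _ (Int.natAbs_pos.2 hq)).sub (lin _ (Int.natAbs_pos.2 hp))
  have l3 : Filter.Tendsto (fun n : ℕ => d 1 (h ^ (q.natAbs * n)) / (n : ℝ) - d 1 (h ^ (p.natAbs * n)) / (n : ℝ))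
      Filter.atTop (nhds 0) := by
    refine squeeze_zero_norm (fun n => ?_) (cz (2 * d 1 a))
    rw [← sub_div, norm_div, Real.norm_eq_abs, Real.norm_natCast]
    gcongr
    exact bd n
  have := tendsto_nhds_unique l2 l3
  have τne : τ ≠ 0 := by rintro rfl; norm_num at τpos
  have h3 : (q.natAbs : ℝ) = p.natAbs := by
    rw [← sub_mul] at this
    rcases mul_eq_zero.1 this with h | h
    · linarith
    · exact absurd h τne
  exact_mod_cast h3.symm

lemma no_flip (H : HM d δ) {g a : G} (gord : ∀ n : ℤ, n ≠ 0 → g ^ n ≠ 1)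
    (aord : ∀ n : ℤ, n ≠ 0 → a ^ n ≠ 1) (hf : a * g * a⁻¹ = g⁻¹) : False := by
  have aord2 : ∀ n : ℤ, n ≠ 0 → (a ^ 2) ^ n ≠ 1 := by
    intro n hn
    have := aord (2 * n) (by omega)
    rw [zpow_mul] at this
    exact_mod_cast this
  apply H.pigeon aord2 (4 * (d 1 a + 2 * δ + 1) + 4 * d 1 a + 10 * δ)
  intro N
  have dp := H.dpos
  obtain ⟨k, hk⟩ := H.unbdd gord (2 * (10 * (N * d 1 (a ^ 2)) + 20 * δ) + 2)
  obtain ⟨m, hm, hm1, hm2⟩ := H.mid (g ^ k)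
  refine ⟨m, fun j hj => ?_⟩
  have hb : d 1 ((a ^ 2) ^ j) ≤ N * d 1 (a ^ 2) := (H.pow_le _ j).trans
    (mul_le_mul_of_nonneg_right (by exact_mod_cast hj) (H.nonneg _ _))
  set D := N * d 1 (a ^ 2) with hD
  have hfk : a * g ^ k = (g ^ k)⁻¹ * a := by
    have := conj_pow (i := k) (a := a) (b := g)
    rw [hf, inv_pow] at this
    rw [this]; group
  set u := g ^ k with hu
  have hfk' : u * a * u = a := by rw [mul_assoc, hfk]; group
  have hfk2 : a * u⁻¹ = u * a := by
    rw [mul_inv_eq_iff_eq_mul]; exact hfk'.symm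
  have hA : Commute (a ^ 2) u := by
    show a ^ 2 * u = u * a ^ 2
    rw [pow_two, mul_assoc, hfk, ← mul_assoc, hfk2, mul_assoc]
  set b := (a ^ 2) ^ j with hbdef
  have hbu : b * u = u * b := (hA.pow_left j)
  have hba : b * a = a * b := ((Commute.refl a).pow_left 2).pow_left j
  have D0 : 0 ≤ D := (H.nonneg _ _).trans hb
  have hbg : d u (b * u) = d 1 b := by
    rw [hbu]; have := H.inv u 1 b; rwa [mul_one] at this
  have n1 := H.near (b := b) (D := D) hm (by simpa using hb) (by linarith) (by linarith) (by linarith)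
  have c1 := H.close (z := b * m) hm
  -- the flip c = u * a
  have E1 : ∀ z, |d u z - d 1 (u * a * z)| ≤ d 1 a := by
    intro z
    have e1 := H.inv (u * a) u z
    rw [hfk'] at e1
    have t1 := H.tri 1 a (u * a * z)
    have t2 := H.tri a 1 (u * a * z)
    have s := H.symm 1 a
    rw [abs_le]; constructor <;> linarith
  have E2 : ∀ z, |d 1 z - d u (u * a * z)| ≤ d 1 a := by
    intro z
    have e1 := H.inv (u * a) 1 z
    have e2 := H.inv u 1 a
    rw [mul_one] at e1 e2
    have t1 := H.tri u (u * a) (u * a * z)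
    have t2 := H.tri (u * a) u (u * a * z)
    have s := H.symm u (u * a)
    rw [abs_le]; constructor <;> linarith
  have cm : d m (u * a * m) ≤ d 1 a + 2 * δ + 1 := by
    have f := H.close (z := u * a * m) hm
    have x1 := abs_le.1 (E1 m)
    have x2 := abs_le.1 (E2 m)
    have s1 := H.symm u (u * a * m)
    have s2 := H.symm u m
    rcases f with f | f <;> linarith
  have hcb : u * a * (b * m) = b * (u * a * m) := by
    rw [← mul_assoc, ← mul_assoc, ← mul_assoc, hbu, mul_assoc u, ← hba, mul_assoc u b a]
  have x1 := abs_le.1 (E1 m)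
  have x2 := abs_le.1 (E1 (b * m))
  rw [hcb] at x2
  have e := H.inv b m (u * a * m)
  have t1 := H.tri 1 (b * m) (b * (u * a * m))
  have t2 := H.tri 1 (b * (u * a * m)) (b * m)
  have t3 := H.tri 1 m (u * a * m)
  have t4 := H.tri 1 (u * a * m) m
  have s1 := H.symm (b * m) (b * (u * a * m))
  have s2 := H.symm m (u * a * m)
  have s3 := H.symm u m
  have s4 := H.symm u (b * m)
  have na := H.nonneg 1 a
  rcases c1 with c1 | c1 <;> linarith

end HM

section WD
variable {G : Type*} [Group G] {S : Set G}

lemma wd_le (x y : G) (l : List G) (hl : ∀ x ∈ l, x ∈ S ∨ x⁻¹ ∈ S) (hp : l.prod = x⁻¹ * y) :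
    wordDist S x y ≤ l.length :=
  csInf_le ⟨0, by rintro _ ⟨l, _, _, rfl⟩; positivity⟩ ⟨l, hl, hp, rfl⟩

lemma exists_word (hS : Subgroup.closure S = ⊤) (g : G) :
    ∃ l : List G, (∀ x ∈ l, x ∈ S ∨ x⁻¹ ∈ S) ∧ l.prod = g := by
  have hg : g ∈ (Subgroup.closure S).toSubmonoid := by rw [hS]; trivial
  rw [Subgroup.closure_toSubmonoid] at hg
  obtain ⟨l, h1, h2⟩ := Submonoid.exists_list_of_mem_closure hg
  exact ⟨l, fun x hx => h1 x hx, h2⟩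

lemma wd_att (hS : Subgroup.closure S = ⊤) (x y : G) :
    ∃ l : List G, (∀ x ∈ l, x ∈ S ∨ x⁻¹ ∈ S) ∧ l.prod = x⁻¹ * y ∧ wordDist S x y = l.length := by
  classical
  have hex : ∃ n : ℕ, ∃ l : List G, (∀ x ∈ l, x ∈ S ∨ x⁻¹ ∈ S) ∧ l.prod = x⁻¹ * y ∧ l.length = n := by
    obtain ⟨l, h1, h2⟩ := exists_word hS (x⁻¹ * y)
    exact ⟨_, l, h1, h2, rfl⟩
  obtain ⟨l, h1, h2, h3⟩ := Nat.find_spec hex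
  refine ⟨l, h1, h2, le_antisymm (wd_le x y l h1 h2) ?_⟩
  refine le_csInf ⟨(l.length : ℝ), ⟨l, h1, h2, rfl⟩⟩ ?_
  rintro _ ⟨l', h1', h2', rfl⟩
  rw [h3]
  exact_mod_cast Nat.find_min' hex ⟨l', h1', h2', rfl⟩

lemma wd_tri (hS : Subgroup.closure S = ⊤) (x y z : G) :
    wordDist S x z ≤ wordDist S x y + wordDist S y z := by
  obtain ⟨l, a1, a2, a3⟩ := wd_att hS x y
  obtain ⟨k, b1, b2, b3⟩ := wd_att hS y z
  have := wd_le (S := S) x z (l ++ k) (by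
    intro t ht; rcases List.mem_append.1 ht with h | h
    · exact a1 t h
    · exact b1 t h) (by rw [List.prod_append, a2, b2]; group)
  rw [a3, b3]
  simpa using this

lemma wd_symm_le (hS : Subgroup.closure S = ⊤) (x y : G) : wordDist S x y ≤ wordDist S y x := by
  obtain ⟨l, a1, a2, a3⟩ := wd_att hS y x
  have := wd_le (S := S) x y (l.map (·⁻¹)).reverse (by
    intro t ht
    simp only [List.mem_reverse, List.mem_map] at ht
    obtain ⟨s, hs, rfl⟩ := ht
    rw [inv_inv]
    exact (a1 s hs).symm) (by rw [← List.prod_inv_reverse, a2]; group)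
  rw [a3]
  simpa using this

lemma wd_HM (hfin : S.Finite) (hS : Subgroup.closure S = ⊤) (δ : ℝ) (hδ : 0 ≤ δ)
    (h4 : ∀ w x y z : G, gromovProd S w x y ≥ min (gromovProd S w x z) (gromovProd S w y z) - δ) :
    HM (wordDist S) δ where
  refl x := by
    apply le_antisymm
    · simpa using wd_le (S := S) x x [] (by simp) (by simp)
    · obtain ⟨l, a1, a2, a3⟩ := wd_att hS x x
      rw [a3]; positivity
  symm x y := le_antisymm (wd_symm_le hS x y) (wd_symm_le hS y x)
  tri := wd_tri hS
  inv b x y := by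
    unfold wordDist
    have : (b * x)⁻¹ * (b * y) = x⁻¹ * y := by group
    rw [this]
  fin r := by
    have hT : {x : G | x ∈ S ∨ x⁻¹ ∈ S}.Finite := by
      refine (hfin.union (hfin.image (·⁻¹))).subset ?_
      rintro x (hx | hx)
      · exact Or.inl hx
      · exact Or.inr ⟨_, hx, inv_inv x⟩
    have := hT.to_subtype
    refine ((List.finite_length_le {x : G | x ∈ S ∨ x⁻¹ ∈ S} ⌊r⌋₊).image
      (fun l => (l.map Subtype.val).prod)).subset ?_
    intro g hg
    obtain ⟨l, a1, a2, a3⟩ := wd_att hS 1 g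
    simp only [Set.mem_ofPred_eq] at hg
    rw [a3] at hg
    lift l to List {x : G | x ∈ S ∨ x⁻¹ ∈ S} using a1
    refine ⟨l, ?_, by simpa using a2⟩
    simp only [Set.mem_ofPred_eq]
    simpa using Nat.le_floor hg
  mid g := by
    obtain ⟨l, a1, a2, a3⟩ := wd_att hS 1 g
    rw [inv_one, one_mul] at a2
    set n := l.length / 2 with hn
    have b1 := wd_le (S := S) 1 (l.take n).prod (l.take n)
      (fun x hx => a1 x (List.mem_of_mem_take hx)) (by simp)
    have b2 := wd_le (S := S) (l.take n).prod g (l.drop n)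
      (fun x hx => a1 x (List.mem_of_mem_drop hx)) (by
        rw [eq_inv_mul_iff_mul_eq, List.prod_take_mul_prod_drop, a2])
    have b3 := wd_tri hS 1 (l.take n).prod g
    rw [List.length_take] at b1
    rw [List.length_drop] at b2
    have c1 : ((min n l.length : ℕ) : ℝ) + ((l.length - n : ℕ) : ℝ) = l.length := by
      norm_cast; omega
    have c2 : ((min n l.length : ℕ) : ℝ) ≤ ((l.length - n : ℕ) : ℝ) := by
      norm_cast; omega
    have c3 : ((l.length - n : ℕ) : ℝ) ≤ ((min n l.length : ℕ) : ℝ) + 1 := by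
      norm_cast; omega
    refine ⟨(l.take n).prod, ?_, ?_, ?_⟩ <;> linarith
  dpos := hδ
  four x y z w := by
    have := h4 w x y z
    unfold gromovProd at this
    have s1 := le_antisymm (wd_symm_le hS x y) (wd_symm_le hS y x)
    rcases min_choice ((wordDist S x w + wordDist S z w - wordDist S x z) / 2)
      ((wordDist S y w + wordDist S z w - wordDist S y z) / 2) with h | h <;> rw [h] at this
    · left; linarith
    · right; linarith

end WD

/-- In a hyperbolic group, if `h` has infinite order, `a` has infinite order and
`h^q = a h^p a⁻¹`, then `p = q`. -/
theorem stmt_1 {G : Type*} [Group G] (hG : IsHyperbolicGroup G)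
    (h : G) (hord : ∀ n : ℤ, n ≠ 0 → h ^ n ≠ 1)
    (a : G) (aord : ∀ n : ℤ, n ≠ 0 → a ^ n ≠ 1)
    (p q : ℤ) (hconj : h ^ q = a * h ^ p * a⁻¹) :
    p = q := by
  obtain ⟨S, hfin, hS, δ, hδ, h4⟩ := hG
  have H := wd_HM hfin hS δ hδ h4
  by_cases hp : p = 0
  · subst hp
    by_contra hq
    exact hord q (Ne.symm hq) (by rw [hconj]; simp)
  by_cases hq : q = 0
  · subst hq
    exfalso
    apply hord p hp
    rw [zpow_zero] at hconj
    exact conj_eq_one_iff.1 hconj.symm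
  rcases Int.natAbs_eq_natAbs_iff.1 (H.abs_eq hord p q hconj hp hq) with h1 | h1
  · exact h1
  · exfalso
    refine H.no_flip (g := h ^ p) (a := a) (fun n hn => ?_) aord ?_
    · rw [← zpow_mul]; exact hord _ (mul_ne_zero hp hn)
    · rw [← hconj, h1]; simp
end

section
/- Let G be a hyperbolic group and let K be a subgroup of G which is not a torsion group (K contains an element of infinite order). Then the centralizer Z_G(K) = {g ∈ G | ∀ k ∈ K, g k = k g} is virtually cyclic: Z_G(K) contains a cyclic subgroup of finite index. -/
section helpers

variable {G : Type*} [Group G]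

/-- Words in `S ∪ S⁻¹`. -/
def IsWordIn (S : Set G) (l : List G) : Prop := ∀ x ∈ l, x ∈ S ∨ x⁻¹ ∈ S

/-- Word length. -/
noncomputable def wlen (S : Set G) (g : G) : ℕ :=
  sInf {n : ℕ | ∃ l : List G, IsWordIn S l ∧ l.prod = g ∧ n = l.length}

theorem wlen_spec {S : Set G} (hS : Subgroup.closure S = ⊤) (g : G) :
    ∃ l : List G, IsWordIn S l ∧ l.prod = g ∧ wlen S g = l.length := by
  have : (wlen S g) ∈ {n : ℕ | ∃ l : List G, IsWordIn S l ∧ l.prod = g ∧ n = l.length} := by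
    apply Nat.sInf_mem
    have hg : g ∈ Subgroup.closure S := by rw [hS]; trivial
    rw [← Subgroup.mem_toSubmonoid, Subgroup.closure_toSubmonoid] at hg
    obtain ⟨l, h1, h2⟩ := Submonoid.exists_list_of_mem_closure hg
    exact ⟨l.length, l, h1, h2, rfl⟩
  exact this

theorem wlen_le {S : Set G} (l : List G) (h : IsWordIn S l) : wlen S l.prod ≤ l.length :=
  Nat.sInf_le ⟨l, h, rfl, rfl⟩

theorem wlen_inv_le {S : Set G} (hS : Subgroup.closure S = ⊤) (g : G) :
    wlen S g⁻¹ ≤ wlen S g := by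
  obtain ⟨l, h1, h2, h3⟩ := wlen_spec hS g
  rw [h3, ← h2, List.prod_inv_reverse]
  refine (wlen_le _ ?_).trans (by simp)
  intro x hx
  simp only [List.mem_reverse, List.mem_map] at hx
  obtain ⟨y, hy, rfl⟩ := hx
  have := h1 y hy
  rw [inv_inv]; exact this.symm

theorem wlen_inv {S : Set G} (hS : Subgroup.closure S = ⊤) (g : G) :
    wlen S g⁻¹ = wlen S g := by
  apply le_antisymm (wlen_inv_le hS g)
  simpa using wlen_inv_le hS g⁻¹

theorem wordDist_eq {S : Set G} (hS : Subgroup.closure S = ⊤) (g h : G) :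
    wordDist S g h = (wlen S (g⁻¹ * h) : ℝ) := by
  unfold wordDist
  apply IsLeast.csInf_eq
  constructor
  · obtain ⟨l, h1, h2, h3⟩ := wlen_spec hS (g⁻¹ * h)
    exact ⟨l, h1, h2, by rw [h3]⟩
  · rintro r ⟨l, h1, h2, rfl⟩
    rw [← h2]
    exact_mod_cast wlen_le l h1

theorem wordDist_symm {S : Set G} (hS : Subgroup.closure S = ⊤) (g h : G) :
    wordDist S g h = wordDist S h g := by
  rw [wordDist_eq hS, wordDist_eq hS, ← wlen_inv hS]; simp

theorem wordDist_left {S : Set G} (a g h : G) :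
    wordDist S (a * g) (a * h) = wordDist S g h := by
  unfold wordDist; simp [mul_assoc]

theorem ball_finite {S : Set G} (hf : S.Finite) (hS : Subgroup.closure S = ⊤) (n : ℕ) :
    {g : G | wlen S g ≤ n}.Finite := by
  have hfin : (S ∪ S⁻¹).Finite := hf.union hf.inv
  have := hfin.to_subtype
  refine ((List.finite_length_le (↥(S ∪ S⁻¹)) n).image
    (fun l => (l.map Subtype.val).prod)).subset ?_
  intro g hg
  obtain ⟨l, h1, h2, h3⟩ := wlen_spec hS g
  have h1' : ∀ x ∈ l, x ∈ S ∪ S⁻¹ := h1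
  refine ⟨l.attachWith _ h1', ?_, ?_⟩
  · simpa [← h3] using hg
  · simpa using h2

theorem prefix_exists {S : Set G} (hS : Subgroup.closure S = ⊤) (x : G) (t : ℕ)
    (ht : t ≤ wlen S x) : ∃ y, wordDist S 1 y ≤ t ∧ wordDist S y x ≤ wlen S x - t := by
  obtain ⟨l, h1, h2, h3⟩ := wlen_spec hS x
  refine ⟨(l.take t).prod, ?_, ?_⟩
  · rw [wordDist_eq hS]
    have := wlen_le (S := S) (l.take t) (fun z hz => h1 z (List.mem_of_mem_take hz))
    simp only [inv_one, one_mul]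
    have h4 : (l.take t).length ≤ t := by simp
    exact_mod_cast this.trans h4
  · rw [wordDist_eq hS]
    have h5 : (l.take t).prod⁻¹ * x = (l.drop t).prod := by
      rw [inv_mul_eq_iff_eq_mul, ← h2, List.prod_take_mul_prod_drop]
    rw [h5, ← Nat.cast_sub ht]
    have := wlen_le (S := S) (l.drop t) (fun z hz => h1 z (List.mem_of_mem_drop hz))
    rw [List.length_drop, ← h3] at this
    exact_mod_cast this

theorem four_pt {S : Set G} {δ : ℝ}
    (h : ∀ w x y z : G,
      gromovProd S w x y ≥ min (gromovProd S w x z) (gromovProd S w y z) - δ) (x y z w : G) :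
    wordDist S x y + wordDist S z w ≤ wordDist S x z + wordDist S y w + 2 * δ ∨
    wordDist S x y + wordDist S z w ≤ wordDist S y z + wordDist S x w + 2 * δ := by
  have := h w x y z
  unfold gromovProd at this
  rcases min_choice ((wordDist S x w + wordDist S z w - wordDist S x z) / 2)
    ((wordDist S y w + wordDist S z w - wordDist S y z) / 2) with h1 | h1 <;> rw [h1] at this
  · left; linarith
  · right; linarith

/-- Key estimate. -/
theorem key_est {S : Set G} (hS : Subgroup.closure S = ⊤) {δ : ℝ} (hδ : 0 ≤ δ)
    (h : ∀ w x y z : G,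
      gromovProd S w x y ≥ min (gromovProd S w x z) (gromovProd S w y z) - δ)
    (g x y : G) (t a L : ℝ) (hgx : g * x = x * g)
    (hL : wordDist S 1 x = L) (h1 : L ≤ wordDist S 1 (g * x)) (h2 : L ≤ wordDist S g x)
    (ha : wordDist S 1 g ≤ a) (hat : a ≤ t) (htL : t + a ≤ L) (ha0 : 0 ≤ a)
    (hy : wordDist S 1 y ≤ t) (hyx : wordDist S y x ≤ L - t) :
    wordDist S y (g * y) ≤ 10 * δ := by
  have e1 : wordDist S g (g * x) = L := by
    rw [← hL, ← wordDist_left g 1 x, mul_one]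
  have e2 : wordDist S x (g * x) ≤ a := by
    rw [hgx]; have := wordDist_left (S := S) x 1 g
    rw [mul_one] at this; linarith
  have e3 : wordDist S g (g * y) ≤ t := by
    have := wordDist_left (S := S) g 1 y
    rw [mul_one] at this; linarith
  have e4 : wordDist S (g * y) (g * x) ≤ L - t := by rw [wordDist_left]; exact hyx
  have sm := wordDist_symm hS
  have f1 : wordDist S 1 (g * x) ≤ L + 2 * δ := by
    rcases four_pt h 1 (g * x) x g with q | q <;>
      linarith [sm x g, sm (g * x) g, sm (g * x) x]
  have f2 : wordDist S (g * y) 1 ≤ t + 4 * δ := by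
    rcases four_pt h (g * y) 1 g (g * x) with q | q <;>
      linarith [sm (g * y) g]
  have f3 : wordDist S y (g * x) ≤ L - t + 4 * δ := by
    rcases four_pt h y (g * x) 1 x with q | q <;>
      linarith [sm y 1, sm (g * x) 1, sm (g * x) x]
  rcases four_pt h y (g * y) 1 (g * x) with q | q <;>
    linarith [sm y 1]

theorem exists_bound {S : Set G} (hf : S.Finite) (hS : Subgroup.closure S = ⊤) {δ : ℝ}
    (hδ : 0 ≤ δ)
    (h : ∀ w x y z : G,
      gromovProd S w x y ≥ min (gromovProd S w x z) (gromovProd S w y z) - δ)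
    (k : G) (hk : ∀ n : ℤ, n ≠ 0 → k ^ n ≠ 1) :
    ∃ R : ℕ, ∀ x : G, k * x = x * k → (∀ n : ℤ, wlen S x ≤ wlen S (k ^ n * x)) →
      wlen S x ≤ R := by
  have hB := ball_finite hf hS ⌊10 * δ⌋₊
  set B := hB.toFinset with hBdef
  set N := B.card + 1 with hN
  set M := (Finset.range N).sup (fun n => wlen S (k ^ n)) with hM
  refine ⟨2 * M, fun x hx hmin => ?_⟩
  by_contra hcon
  push Not at hcon
  obtain ⟨y, hy, hyx⟩ := prefix_exists hS x M (by omega)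
  have hmaps : ∀ n ∈ Finset.range N, y⁻¹ * (k ^ n * y) ∈ B := by
    intro n hn
    have hc : Commute (k ^ n) x := Commute.pow_left hx n
    have hle : wlen S (k ^ n) ≤ M := Finset.le_sup (f := fun n => wlen S (k ^ n)) hn
    have hh : (2 * M : ℝ) ≤ wlen S x := by exact_mod_cast hcon.le
    have := key_est hS hδ h (k ^ n) x y M M (wlen S x) hc (by rw [wordDist_eq hS]; simp)
      (by rw [wordDist_eq hS]
          have := hmin n
          simpa using this)
      (by rw [wordDist_eq hS]
          have := hmin (-n)
          simpa using this)
      (by rw [wordDist_eq hS]; simpa using hle) le_rfl (by linarith) (by positivity) hy hyx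
    rw [wordDist_eq hS] at this
    rw [hBdef, Set.Finite.mem_toFinset]
    exact Nat.le_floor this
  obtain ⟨m, hm, n, hn, hmn, heq⟩ :=
    Finset.exists_ne_map_eq_of_card_lt_of_maps_to (by simp [hN]) hmaps
  have heq' : k ^ m = k ^ n := by simpa using heq
  apply hk ((m : ℤ) - n) (by omega)
  rw [zpow_sub, zpow_natCast, zpow_natCast, heq', mul_inv_cancel]

theorem relIndex_ne {S : Set G} (hf : S.Finite) (hS : Subgroup.closure S = ⊤) {δ : ℝ}
    (hδ : 0 ≤ δ)
    (h : ∀ w x y z : G,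
      gromovProd S w x y ≥ min (gromovProd S w x z) (gromovProd S w y z) - δ)
    (k : G) (hk : ∀ n : ℤ, n ≠ 0 → k ^ n ≠ 1) :
    ((Subgroup.zpowers k).subgroupOf (Subgroup.centralizer {k})).FiniteIndex := by
  obtain ⟨R, hR⟩ := exists_bound hf hS hδ h k hk
  have hB := ball_finite hf hS R
  have : Finite {x : Subgroup.centralizer ({k} : Set G) // wlen S (x : G) ≤ R} := by
    have := hB.to_subtype
    exact Finite.of_injective
      (fun x => (⟨x.1.1, x.2⟩ : {g : G | wlen S g ≤ R}))
      (fun a b hab => by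
        have h9 := Subtype.ext_iff.1 hab
        exact Subtype.ext (Subtype.ext h9))
  have hfin : Finite (Subgroup.centralizer ({k} : Set G) ⧸
      (Subgroup.zpowers k).subgroupOf (Subgroup.centralizer {k})) := by
    refine Finite.of_surjective
      (fun x : {x : Subgroup.centralizer ({k} : Set G) // wlen S (x : G) ≤ R} =>
        QuotientGroup.mk x.1) ?_
    intro q
    induction q using QuotientGroup.induction_on with
    | H x =>
    have hx : k * x.1 = x.1 * k := Subgroup.mem_centralizer_iff.1 x.2 k rfl
    obtain ⟨n, hn⟩ : ∃ n : ℤ, ∀ m : ℤ, wlen S (k ^ n * x.1) ≤ wlen S (k ^ m * x.1) :=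
      ⟨_, fun m => Function.argmin_le (fun n : ℤ => wlen S (k ^ n * x.1)) m⟩
    have hcx : Commute k x.1 := hx
    have hcomm : Commute k (k ^ n * x.1) := ((Commute.refl k).zpow_right n).mul_right hcx
    refine ⟨⟨⟨k ^ n * x.1, ?_⟩, ?_⟩, ?_⟩
    · rw [Subgroup.mem_centralizer_iff]
      rintro _ rfl
      exact hcomm
    · refine hR _ hcomm ?_
      intro m
      rw [← mul_assoc, ← zpow_add]
      exact hn _
    · rw [QuotientGroup.eq, Subgroup.mem_subgroupOf]
      refine Subgroup.mem_zpowers_iff.2 ⟨-n, ?_⟩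
      have := (hcx.zpow_left n).eq
      simp [this]
  exact Subgroup.finiteIndex_of_finite_quotient

end helpers

/-- In a hyperbolic group, the centralizer of a subgroup `K` which is not a torsion group
is virtually cyclic. -/
theorem stmt_7 {G : Type*} [Group G] (hG : IsHyperbolicGroup G)
    (K : Subgroup G) (hK : ∃ k ∈ K, ∀ n : ℤ, n ≠ 0 → k ^ n ≠ 1) :
    ∃ H : Subgroup (Subgroup.centralizer (K : Set G)), H.FiniteIndex ∧ IsCyclic H := by
  obtain ⟨S, hf, hS, δ, hδ, h⟩ := hG
  obtain ⟨k, hkK, hk⟩ := hK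
  have h1 := relIndex_ne hf hS hδ h k hk
  refine ⟨(Subgroup.zpowers k).subgroupOf _, ⟨?_⟩, ?_⟩
  · have hle : Subgroup.centralizer (K : Set G) ≤ Subgroup.centralizer {k} :=
      Subgroup.centralizer_le (by simpa using hkK)
    have h2 : (Subgroup.zpowers k).relIndex (Subgroup.centralizer {k}) ≠ 0 := h1.index_ne_zero
    exact mt (Subgroup.relIndex_eq_zero_of_le_right hle) h2
  · let f : (Subgroup.zpowers k).subgroupOf (Subgroup.centralizer (K : Set G)) →*
        Subgroup.zpowers k :=
      { toFun := fun x => ⟨x.1.1, x.2⟩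
        map_one' := rfl
        map_mul' := fun _ _ => rfl }
    exact isCyclic_of_injective f
      (fun a b hab => by
        have h9 := Subtype.ext_iff.1 hab
        exact Subtype.ext (Subtype.ext h9))
end
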